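/- Let (P, Q) ∈ S_e with H(P_0) < ∞, and suppose the entropy balance H_e(P_0) + E(Q | Q^{P⊗P}) = H_e(P_T) + E(Q | Υ_# Q^{P⊗P}) holds with both sides finite. Then H(P_T) + E(Q | Q^{P⊗P}) + E(Q | Υ_# Q^{P⊗P}) ≥ H(P_0), with equality if and only if Q = Q^{P⊗P}. -/

import Mathlib

open MeasureTheory
open scoped RealInnerProductSpace ENNReal

noncomputable section

/-- Velocity space `ℝ^d`. -/
abbrev Vel (d : ℕ) := EuclideanSpace ℝ (Fin d)

/-- The space `[0,T] × ℝ^{2d} × ℝ^{2d}` of collision data `(t, (v, v_*), (v', v'_*))`. -/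
abbrev Coll (d : ℕ) := ℝ × ((Vel d × Vel d) × (Vel d × Vel d))

/-- The collision flux `Q^{P⊗P}(dt, dv, dv_*, dv', dv'_*) =
dt ½ P_t(dv) P_t(dv_*) ∫ dω B(v−v_*, ω) δ_{v'} δ_{v'_*}`, with hard-sphere kernel
`B(w,ω) = |w·ω|/2` and `dω` the surface measure on the unit sphere. -/
noncomputable def collisionFlux (d : ℕ) (T : ℝ) (P : ℝ → Measure (Vel d)) :
    Measure (Coll d) :=
  ((volume : Measure ℝ).restrict (Set.Icc 0 T)).bind fun t =>
    (2⁻¹ : ℝ≥0∞) •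
      ((((P t).prod (P t)).prod (volume : Measure (Vel d)).toSphere).bind fun q =>
        (ENNReal.ofReal (|⟪q.1.1 - q.1.2, (q.2 : Vel d)⟫| / 2)) •
          Measure.dirac (t, ((q.1.1, q.1.2),
            (q.1.1 - ⟪q.1.1 - q.1.2, (q.2 : Vel d)⟫ • (q.2 : Vel d),
             q.1.2 + ⟪q.1.1 - q.1.2, (q.2 : Vel d)⟫ • (q.2 : Vel d)))))

/-- The involution `Υ` exchanging incoming and outgoing velocity pairs. -/
def ups (d : ℕ) : Coll d → Coll d := fun z => (z.1, (z.2.2, z.2.1))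

/-- The extended relative entropy functional
`E(V | Ṽ) = sup_{φ ∈ C_b} { V(φ) − Ṽ(e^φ − 1) }`. -/
noncomputable def Efun {X : Type*} [MeasurableSpace X] [TopologicalSpace X]
    (V W : Measure X) : EReal :=
  ⨆ φ : BoundedContinuousFunction X ℝ,
    ((∫ x, φ x ∂V - ∫ x, (Real.exp (φ x) - 1) ∂W : ℝ) : EReal)

/-- `H(π) = ∫ f log f dv` for `dπ = f dℓ`. -/
noncomputable def Hfun {d : ℕ} (μ : Measure (Vel d)) : ℝ :=
  ∫ v, Real.log ((μ.rnDeriv volume v).toReal) ∂μ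

/-- The Maxwellian on `ℝ^d` with zero mean and energy `e`. -/
noncomputable def maxwellian (d : ℕ) (e : ℝ) : Measure (Vel d) :=
  volume.withDensity fun v => ENNReal.ofReal
    (((d / (2 * e)) / (2 * Real.pi)) ^ ((d : ℝ) / 2) *
      Real.exp (-(d / (2 * e)) * (‖v‖ ^ 2 / 2)))

/-- `H_e(π) = Ent(π | M_e) + (d/(2e)) (e − π(|v|²/2))`. -/
noncomputable def He (d : ℕ) (e : ℝ) (μ : Measure (Vel d)) : ℝ :=
  (∫ v, Real.log ((μ.rnDeriv (maxwellian d e) v).toReal) ∂μ)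
    + ((d : ℝ) / (2 * e)) * (e - ∫ v, ‖v‖ ^ 2 / 2 ∂μ)

lemma Efun_nonneg {X : Type*} [MeasurableSpace X] [TopologicalSpace X]
    (V W : Measure X) : 0 ≤ Efun V W := by
  unfold Efun
  refine le_iSup_of_le 0 ?_
  simp

lemma integrable_exp_sub_one {X : Type*} [MeasurableSpace X] [TopologicalSpace X]
    [OpensMeasurableSpace X] (W : Measure X) [IsFiniteMeasure W]
    (φ : BoundedContinuousFunction X ℝ) : Integrable (fun x => Real.exp (φ x) - 1) W := by
  refine Integrable.sub ?_ (integrable_const 1)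
  refine Integrable.of_bound
    (Real.continuous_exp.comp φ.continuous).measurable.aestronglyMeasurable
    (Real.exp ‖φ‖) (ae_of_all _ fun x => ?_)
  rw [Real.norm_eq_abs, Real.abs_exp]
  exact Real.exp_le_exp.2 ((le_abs_self _).trans (φ.norm_coe_le_norm x))

lemma Efun_self {X : Type*} [MeasurableSpace X] [TopologicalSpace X] [OpensMeasurableSpace X]
    (W : Measure X) [IsFiniteMeasure W] : Efun W W = 0 := by
  refine le_antisymm (iSup_le fun φ => ?_) (Efun_nonneg W W)
  have hi : Integrable φ W := φ.integrable W
  have h := integral_mono hi (integrable_exp_sub_one W φ) fun x => by linarith [Real.add_one_le_exp (φ x)]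
  exact_mod_cast sub_nonpos.2 h

/-- If `E(V | W)` vanishes then `V(φ) ≤ W(φ)`: linearize `V(εφ) ≤ W(e^{εφ} − 1)` at `ε = 0`. -/
lemma integral_le_of_Efun_eq_zero {X : Type*} [MeasurableSpace X] [TopologicalSpace X]
    [OpensMeasurableSpace X] {V W : Measure X} [IsFiniteMeasure W]
    (h : Efun V W = 0) (φ : BoundedContinuousFunction X ℝ) :
    ∫ x, φ x ∂V ≤ ∫ x, φ x ∂W := by
  have key : ∀ ε : ℝ, 0 < ε → ε * ‖φ‖ ≤ 1 →
      ∫ x, φ x ∂V ≤ ∫ x, φ x ∂W + ε * (‖φ‖ ^ 2 * W.real Set.univ) := by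
    intro ε hε hε1
    have h1 : ((∫ x, (ε • φ) x ∂V - ∫ x, (Real.exp ((ε • φ) x) - 1) ∂W : ℝ) : EReal) ≤ 0 := by
      rw [← h]
      exact le_iSup (fun ψ : BoundedContinuousFunction X ℝ =>
        ((∫ x, ψ x ∂V - ∫ x, (Real.exp (ψ x) - 1) ∂W : ℝ) : EReal)) (ε • φ)
    have h2 : ∫ x, ε * φ x ∂V ≤ ∫ x, (Real.exp (ε * φ x) - 1) ∂W :=
      sub_nonpos.1 (by exact_mod_cast h1)
    have hb : ∀ x, |φ x| ≤ ‖φ‖ := fun x => φ.norm_coe_le_norm x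
    have hpt : ∀ x, Real.exp (ε * φ x) - 1 ≤ ε * φ x + ε ^ 2 * ‖φ‖ ^ 2 := by
      intro x
      have hx : |ε * φ x| ≤ ε * ‖φ‖ := by
        rw [abs_mul, abs_of_pos hε]
        exact mul_le_mul_of_nonneg_left (hb x) hε.le
      have h3 := (abs_le.1 (Real.abs_exp_sub_one_sub_id_le (hx.trans hε1))).2
      have h4 : (ε * φ x) ^ 2 ≤ (ε * ‖φ‖) ^ 2 := sq_le_sq' (abs_le.1 hx).1 (abs_le.1 hx).2
      nlinarith
    have hexp : Integrable (fun x => Real.exp (ε * φ x) - 1) W :=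
      integrable_exp_sub_one W (ε • φ)
    have hi : Integrable (fun x => ε * φ x) W := (φ.integrable W).const_mul ε
    have h5 := integral_mono hexp (hi.add (integrable_const (ε ^ 2 * ‖φ‖ ^ 2))) hpt
    have h6 : ∫ x, (ε * φ x + ε ^ 2 * ‖φ‖ ^ 2) ∂W
        = ε * ∫ x, φ x ∂W + W.real Set.univ * (ε ^ 2 * ‖φ‖ ^ 2) := by
      rw [integral_add hi (integrable_const _), integral_const_mul, integral_const, smul_eq_mul]
    rw [integral_const_mul] at h2
    have h7 : ε * ∫ x, φ x ∂V
        ≤ ε * (∫ x, φ x ∂W + ε * (‖φ‖ ^ 2 * W.real Set.univ)) := by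
      calc ε * ∫ x, φ x ∂V ≤ _ := h2
        _ ≤ _ := h5
        _ = _ := h6
        _ = _ := by ring
    exact le_of_mul_le_mul_left h7 hε
  set C := ‖φ‖ ^ 2 * W.real Set.univ
  have hC0 : 0 ≤ C := by positivity
  refine le_of_forall_pos_le_add fun δ hδ => ?_
  have hp : 0 < 1 + ‖φ‖ + C / δ := by positivity
  have h1 := key (1 + ‖φ‖ + C / δ)⁻¹ (inv_pos.2 hp) (by
    rw [inv_mul_le_iff₀ hp]
    have : 0 ≤ C / δ := by positivity
    linarith)
  refine h1.trans (add_le_add le_rfl ?_)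
  rw [inv_mul_le_iff₀ hp]
  have : C / δ * δ = C := div_mul_cancel₀ _ hδ.ne'
  nlinarith [norm_nonneg φ]

lemma Efun_eq_zero_iff {X : Type*} [MeasurableSpace X] [TopologicalSpace X]
    [HasOuterApproxClosed X] [BorelSpace X]
    {V W : Measure X} [IsFiniteMeasure V] [IsFiniteMeasure W] :
    Efun V W = 0 ↔ V = W := by
  refine ⟨fun h => ext_of_forall_integral_eq_of_IsFiniteMeasure fun φ => ?_, ?_⟩
  · refine le_antisymm (integral_le_of_Efun_eq_zero h φ) ?_
    have := integral_le_of_Efun_eq_zero h (-φ)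
    simp only [BoundedContinuousFunction.coe_neg, Pi.neg_apply, integral_neg] at this
    linarith
  · rintro rfl
    exact Efun_self V

lemma bind_univ_le {α β : Type*} [MeasurableSpace α] [MeasurableSpace β]
    (m : Measure α) (f : α → Measure β) :
    m.bind f Set.univ ≤ ∫⁻ a, f a Set.univ ∂m := by
  by_cases hf : AEMeasurable f m
  · rw [Measure.bind_apply MeasurableSet.univ hf]
  · simp [Measure.bind, Measure.map_of_not_aemeasurable hf]

lemma lintegral_relative_speed_le {d : ℕ} {e : ℝ} (μ : Measure (Vel d))
    [IsProbabilityMeasure μ] (hint : Integrable (fun v => ‖v‖ ^ 2 / 2) μ)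
    (hle : (∫ v, ‖v‖ ^ 2 / 2 ∂μ) ≤ e) :
    ∫⁻ q, ENNReal.ofReal (|⟪q.1.1 - q.1.2, (q.2 : Vel d)⟫| / 2)
        ∂((μ.prod μ).prod (volume : Measure (Vel d)).toSphere)
      ≤ (1 + ENNReal.ofReal e + ENNReal.ofReal e)
          * (volume : Measure (Vel d)).toSphere Set.univ := by
  have hm : Measurable fun v : Vel d => ENNReal.ofReal (‖v‖ ^ 2 / 2) := by fun_prop
  have he : ∫⁻ v, ENNReal.ofReal (‖v‖ ^ 2 / 2) ∂μ ≤ ENNReal.ofReal e := by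
    rw [← ofReal_integral_eq_lintegral_ofReal hint (ae_of_all _ fun v => by positivity)]
    exact ENNReal.ofReal_le_ofReal hle
  set g : Vel d × Vel d → ℝ≥0∞ := fun p =>
    1 + ENNReal.ofReal (‖p.1‖ ^ 2 / 2) + ENNReal.ofReal (‖p.2‖ ^ 2 / 2) with hg
  have hgm : Measurable g := by fun_prop
  have hgint : ∫⁻ p, g p ∂(μ.prod μ) ≤ 1 + ENNReal.ofReal e + ENNReal.ofReal e := by
    rw [hg, lintegral_add_left (by fun_prop), lintegral_add_left (by fun_prop)]
    have h1 : ∫⁻ p : Vel d × Vel d, ENNReal.ofReal (‖p.1‖ ^ 2 / 2) ∂(μ.prod μ)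
        = ∫⁻ v, ENNReal.ofReal (‖v‖ ^ 2 / 2) ∂μ := by
      rw [lintegral_prod _ (by fun_prop)]; simp
    have h2 : ∫⁻ p : Vel d × Vel d, ENNReal.ofReal (‖p.2‖ ^ 2 / 2) ∂(μ.prod μ)
        = ∫⁻ v, ENNReal.ofReal (‖v‖ ^ 2 / 2) ∂μ := by
      rw [lintegral_prod _ (by fun_prop)]; simp
    rw [h1, h2]
    simp only [lintegral_const, measure_univ, mul_one]
    gcongr
  calc _ ≤ ∫⁻ q, g q.1 ∂((μ.prod μ).prod (volume : Measure (Vel d)).toSphere) := by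
        refine lintegral_mono fun q => ?_
        have hω : ‖(q.2 : Vel d)‖ = 1 := by simp
        have h1 : |⟪q.1.1 - q.1.2, (q.2 : Vel d)⟫| ≤ ‖q.1.1‖ + ‖q.1.2‖ := by
          refine (abs_real_inner_le_norm _ _).trans ?_
          rw [hω, mul_one]
          exact norm_sub_le _ _
        have h2 : |⟪q.1.1 - q.1.2, (q.2 : Vel d)⟫| / 2
            ≤ 1 + ‖q.1.1‖ ^ 2 / 2 + ‖q.1.2‖ ^ 2 / 2 := by
          nlinarith [sq_nonneg (‖q.1.1‖ - 1), sq_nonneg (‖q.1.2‖ - 1)]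
        refine (ENNReal.ofReal_le_ofReal h2).trans (le_of_eq ?_)
        rw [hg, ENNReal.ofReal_add (by positivity) (by positivity),
          ENNReal.ofReal_add (by positivity) (by positivity), ENNReal.ofReal_one]
    _ = (∫⁻ p, g p ∂(μ.prod μ)) * (volume : Measure (Vel d)).toSphere Set.univ := by
        rw [lintegral_prod _ (by fun_prop)]
        simp only [lintegral_const]
        rw [lintegral_mul_const _ hgm]
    _ ≤ _ := by gcongr

lemma isFiniteMeasure_collisionFlux (d : ℕ) (T e : ℝ) (P : ℝ → Measure (Vel d))
    (hPprob : ∀ t ∈ Set.Icc 0 T, IsProbabilityMeasure (P t))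
    (hPmom : ∀ t ∈ Set.Icc 0 T, Integrable (fun v => ‖v‖ ^ 2 / 2) (P t))
    (hPmomle : ∀ t ∈ Set.Icc 0 T, (∫ v, ‖v‖ ^ 2 / 2 ∂(P t)) ≤ e) :
    IsFiniteMeasure (collisionFlux d T P) := by
  set C : ℝ≥0∞ := (2⁻¹ : ℝ≥0∞) * ((1 + ENNReal.ofReal e + ENNReal.ofReal e)
    * (volume : Measure (Vel d)).toSphere Set.univ) with hC
  have hCtop : C < ⊤ := by
    rw [hC]
    refine ENNReal.mul_lt_top (by simp) (ENNReal.mul_lt_top ?_ (measure_lt_top _ _))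
    simp [ENNReal.add_lt_top]
  refine ⟨?_⟩
  refine lt_of_le_of_lt (bind_univ_le _ _) ?_
  refine lt_of_le_of_lt (b := ∫⁻ _ in Set.Icc (0 : ℝ) T, C) ?_ ?_
  · refine setLIntegral_mono' measurableSet_Icc fun t ht => ?_
    have := hPprob t ht
    rw [Measure.smul_apply, smul_eq_mul, hC]
    gcongr
    refine (bind_univ_le _ _).trans ?_
    simpa using lintegral_relative_speed_le (P t) (hPmom t ht) (hPmomle t ht)
  · rw [lintegral_const]
    exact ENNReal.mul_lt_top hCtop (by simp)

lemma He_eq_Hfun_add_const {d : ℕ} (hd : 0 < d) {e : ℝ} (he : 0 < e) (μ : Measure (Vel d))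
    [IsProbabilityMeasure μ] (habs : μ ≪ volume)
    (hint : Integrable (fun v => Real.log ((μ.rnDeriv volume v).toReal)) μ)
    (hmom : Integrable (fun v => ‖v‖ ^ 2 / 2) μ) :
    He d e μ = Hfun μ
      + (d / (2 * e) * e - Real.log (((d / (2 * e)) / (2 * Real.pi)) ^ ((d : ℝ) / 2))) := by
  set b : ℝ := d / (2 * e) with hb
  have hd' : (0 : ℝ) < d := by exact_mod_cast hd
  have hbpos : 0 < b := by positivity
  set c : ℝ := (b / (2 * Real.pi)) ^ ((d : ℝ) / 2) with hc
  have hcpos : 0 < c := Real.rpow_pos_of_pos (by positivity) _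
  have hrn : μ.rnDeriv (maxwellian d e) =ᵐ[volume] fun v =>
      (ENNReal.ofReal (c * Real.exp (-b * (‖v‖ ^ 2 / 2))))⁻¹ * μ.rnDeriv volume v := by
    refine Measure.rnDeriv_withDensity_right μ volume ?_ ?_ ?_
    · exact Measurable.aemeasurable (by fun_prop)
    · exact ae_of_all _ fun v => by
        have : 0 < c * Real.exp (-b * (‖v‖ ^ 2 / 2)) := by positivity
        simpa using this
    · exact ae_of_all _ fun v => ENNReal.ofReal_ne_top
  have hlog : ∀ᵐ v ∂μ, Real.log ((μ.rnDeriv (maxwellian d e) v).toReal)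
      = (Real.log ((μ.rnDeriv volume v).toReal) + b * (‖v‖ ^ 2 / 2)) - Real.log c := by
    filter_upwards [habs.ae_le hrn, Measure.rnDeriv_pos habs,
      habs.ae_le (Measure.rnDeriv_lt_top μ volume)] with v h1 h2 h3
    have hpos : 0 < c * Real.exp (-b * (‖v‖ ^ 2 / 2)) := by positivity
    rw [h1, ENNReal.toReal_mul, ENNReal.toReal_inv, ENNReal.toReal_ofReal hpos.le,
      Real.log_mul (inv_pos.2 hpos).ne' (ENNReal.toReal_pos h2.ne' h3.ne).ne', Real.log_inv,
      Real.log_mul hcpos.ne' (Real.exp_pos _).ne', Real.log_exp]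
    ring
  have hsum : Integrable (fun v => Real.log ((μ.rnDeriv volume v).toReal)
      + b * (‖v‖ ^ 2 / 2)) μ := hint.add (hmom.const_mul b)
  unfold He Hfun
  rw [integral_congr_ae hlog, integral_sub hsum (integrable_const _),
    integral_add hint (hmom.const_mul b), integral_const_mul, integral_const]
  simp only [probReal_univ, one_smul]
  ring

/-- Proposition 2.3: for `(P,Q) ∈ S_e` with `H(P_0) < ∞` satisfying the entropy balance
`H_e(P_0) + E(Q | Q^{P⊗P}) = H_e(P_T) + E(Q | Υ_# Q^{P⊗P})` with both sides finite,
one has `H(P_T) + E(Q | Q^{P⊗P}) + E(Q | Υ_# Q^{P⊗P}) ≥ H(P_0)`, with equality iff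
`Q = Q^{P⊗P}`. -/
theorem reverse_entropy_inequality
    (d : ℕ) (hd : 0 < d) (T e : ℝ) (hT : 0 < T) (he : 0 < e)
    (P : ℝ → Measure (Vel d)) (Q : Measure (Coll d)) [IsFiniteMeasure Q]
    (hPmeas : Measurable P)
    -- `(P, Q) ∈ S_e` : `P` is a weakly continuous path in `P_e` ...
    (hPprob : ∀ t ∈ Set.Icc 0 T, IsProbabilityMeasure (P t))
    (hPcont : ∀ φ : BoundedContinuousFunction (Vel d) ℝ,
      ContinuousOn (fun t => ∫ v, φ v ∂(P t)) (Set.Icc 0 T))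
    (hPmom : ∀ t ∈ Set.Icc 0 T, Integrable (fun v => ‖v‖ ^ 2 / 2) (P t))
    (hPmomle : ∀ t ∈ Set.Icc 0 T, (∫ v, ‖v‖ ^ 2 / 2 ∂(P t)) ≤ e)
    (hPmean : ∀ t ∈ Set.Icc 0 T, (∫ v, v ∂(P t)) = 0)
    -- ... `Q` is symmetric ...
    (hQsymm₁ : Q.map (fun z : Coll d => (z.1, ((z.2.1.2, z.2.1.1), z.2.2))) = Q)
    (hQsymm₂ : Q.map (fun z : Coll d => (z.1, (z.2.1, (z.2.2.2, z.2.2.1)))) = Q)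
    -- ... and `(P, Q)` satisfies the balance equation
    (hbal : ∀ φ ψ : BoundedContinuousFunction (ℝ × Vel d) ℝ,
      (∀ v t, HasDerivAt (fun s => φ (s, v)) (ψ (t, v)) t) →
      (∫ v, φ (T, v) ∂(P T)) - (∫ v, φ (0, v) ∂(P 0))
          - (∫ t in Set.Icc 0 T, (∫ v, ψ (t, v) ∂(P t)))
        = ∫ z, (φ (z.1, z.2.2.1) + φ (z.1, z.2.2.2)
                  - φ (z.1, z.2.1.1) - φ (z.1, z.2.1.2)) ∂Q)
    -- finiteness of `H(P_0)` and `H(P_T)`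
    (habs0 : P 0 ≪ volume) (habsT : P T ≪ volume)
    (hint0 : Integrable (fun v => Real.log (((P 0).rnDeriv volume v).toReal)) (P 0))
    (hintT : Integrable (fun v => Real.log (((P T).rnDeriv volume v).toReal)) (P T))
    -- the entropy balance, with both sides finite
    (hEB : ((He d e (P 0) : ℝ) : EReal) + Efun Q (collisionFlux d T P)
        = ((He d e (P T) : ℝ) : EReal) + Efun Q ((collisionFlux d T P).map (ups d)))
    (hfin₁ : Efun Q (collisionFlux d T P) ≠ ⊤)
    (hfin₂ : Efun Q ((collisionFlux d T P).map (ups d)) ≠ ⊤) :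
    ((Hfun (P 0) : ℝ) : EReal)
        ≤ ((Hfun (P T) : ℝ) : EReal) + Efun Q (collisionFlux d T P)
            + Efun Q ((collisionFlux d T P).map (ups d)) ∧
    (((Hfun (P T) : ℝ) : EReal) + Efun Q (collisionFlux d T P)
            + Efun Q ((collisionFlux d T P).map (ups d)) = ((Hfun (P 0) : ℝ) : EReal)
      ↔ Q = collisionFlux d T P) := by
  have h0 : (0 : ℝ) ∈ Set.Icc 0 T := ⟨le_rfl, hT.le⟩
  have h1 : T ∈ Set.Icc 0 T := ⟨hT.le, le_rfl⟩
  have := hPprob 0 h0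
  have := hPprob T h1
  have := isFiniteMeasure_collisionFlux d T e P hPprob hPmom hPmomle
  rw [← Efun_eq_zero_iff]
  have hE₁ := Efun_nonneg Q (collisionFlux d T P)
  have hE₂ := Efun_nonneg Q ((collisionFlux d T P).map (ups d))
  rw [He_eq_Hfun_add_const hd he (P 0) habs0 hint0 (hPmom 0 h0),
    He_eq_Hfun_add_const hd he (P T) habsT hintT (hPmom T h1)] at hEB
  generalize Efun Q (collisionFlux d T P) = E₁ at *
  generalize Efun Q ((collisionFlux d T P).map (ups d)) = E₂ at *
  lift E₁ to ℝ using ⟨hfin₁, (lt_of_lt_of_le (EReal.bot_lt_zero) hE₁).ne'⟩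
  lift E₂ to ℝ using ⟨hfin₂, (lt_of_lt_of_le (EReal.bot_lt_zero) hE₂).ne'⟩
  norm_cast at *
  refine ⟨by linarith, fun h => by linarith, fun h => by linarith⟩

end
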